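/- arXiv:1606.07384 — 6 statements merged into one kernel-verified Lean document; each statement's English description precedes it below -/
import Mathlib

section
/- Let p, q ∈ [0,1]^S be conditional probability tables with 0 < p_k + q_k < 2 for every k ∈ {1,…,m}, and let P = P_p and Q = P_q be the corresponding Bayesian networks. Then d_H(P,Q)² ≤ 2·Σ_{k=1}^m √(Pr_P[Π_k]·Pr_Q[Π_k]) · (p_k − q_k)² / ((p_k + q_k)·(2 − p_k − q_k)). -/
open scoped BigOperators Classical

/-- The index set `S` of parental configurations: pairs `(i, a)` where
`a : Parents i → Bool`. -/
abbrev BNIdx (d : ℕ) (Par : Fin d → Finset (Fin d)) :=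
  (i : Fin d) × ({j : Fin d // j ∈ Par i} → Bool)

/-- The restriction of `x ∈ {0,1}^d` to the parents of node `i`. -/
def cfgOf {d : ℕ} (Par : Fin d → Finset (Fin d)) (x : Fin d → Bool) (i : Fin d) :
    {j : Fin d // j ∈ Par i} → Bool :=
  fun j => x j.1

/-- The Bayesian network `P_p` with conditional probability table `p`. -/
noncomputable def bnDist {d : ℕ} (Par : Fin d → Finset (Fin d))
    (p : BNIdx d Par → ℝ) (x : Fin d → Bool) : ℝ :=
  ∏ i : Fin d, if x i then p ⟨i, cfgOf Par x i⟩ else 1 - p ⟨i, cfgOf Par x i⟩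

/-- `Pr_R[Π_k]`, the probability of the parental configuration `k` under `R`. -/
noncomputable def prCfg {d : ℕ} (Par : Fin d → Finset (Fin d))
    (R : (Fin d → Bool) → ℝ) (k : BNIdx d Par) : ℝ :=
  ∑ x : Fin d → Bool, if cfgOf Par x k.1 = k.2 then R x else 0

/-- Probability of an event `A` under `R`. -/
noncomputable def prEvent {d : ℕ} (R : (Fin d → Bool) → ℝ)
    (A : (Fin d → Bool) → Prop) : ℝ :=
  ∑ x : Fin d → Bool, if A x then R x else 0

/-- Expectation `E_{X ∼ R}[g(X)]`. -/
noncomputable def expec {d : ℕ} (R : (Fin d → Bool) → ℝ)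
    (g : (Fin d → Bool) → ℝ) : ℝ :=
  ∑ x : Fin d → Bool, R x * g x

/-- The vector `F(x, q) ∈ ℝ^S`. -/
noncomputable def Fvec {d : ℕ} (Par : Fin d → Finset (Fin d))
    (x : Fin d → Bool) (q : BNIdx d Par → ℝ) (k : BNIdx d Par) : ℝ :=
  if cfgOf Par x k.1 = k.2 then (if x k.1 then 1 else 0) else q k

/-- `R` is a probability distribution on the finite set `D`. -/
def IsProbDist {D : Type*} [Fintype D] (R : D → ℝ) : Prop :=
  (∀ x, 0 ≤ R x) ∧ ∑ x, R x = 1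

/-- Total variation distance. -/
noncomputable def dTV {D : Type*} [Fintype D] (A B : D → ℝ) : ℝ :=
  (∑ x, |A x - B x|) / 2

/-- Squared Hellinger distance `d_H(A,B)² = 1 - Σ √(A(x)·B(x))`. -/
noncomputable def hellingerSq {D : Type*} [Fintype D] (A B : D → ℝ) : ℝ :=
  1 - ∑ x, Real.sqrt (A x * B x)

/-- Euclidean norm on `ℝ^ι`. -/
noncomputable def enorm2 {ι : Type*} [Fintype ι] (v : ι → ℝ) : ℝ :=
  Real.sqrt (∑ k, v k ^ 2)

/-- The second-moment matrix `M_R` (relative to `q`). -/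
noncomputable def covM {d : ℕ} (Par : Fin d → Finset (Fin d))
    (R : (Fin d → Bool) → ℝ) (q : BNIdx d Par → ℝ) :
    Matrix (BNIdx d Par) (BNIdx d Par) ℝ :=
  fun k l => expec R (fun x => (Fvec Par x q k - q k) * (Fvec Par x q l - q l))

/-- `M_R^0`: the matrix `M_R` with zeroed diagonal. -/
noncomputable def covM0 {d : ℕ} (Par : Fin d → Finset (Fin d))
    (R : (Fin d → Bool) → ℝ) (q : BNIdx d Par → ℝ) :
    Matrix (BNIdx d Par) (BNIdx d Par) ℝ :=
  fun k l => if k = l then 0 else covM Par R q k l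

/-- Spectral norm (ℓ²-operator norm) of a real matrix. -/
noncomputable def specNorm {ι : Type*} [Fintype ι] [DecidableEq ι]
    (M : Matrix ι ι ℝ) : ℝ :=
  ‖Matrix.toEuclideanCLM (𝕜 := ℝ) M‖

/-!
Reveal the coordinates of `x` one at a time. The affinity `∑ √(P Q)` of the laws of the first `n`
coordinates decreases from `1` to `1 - d_H(P, Q)²`, and the step at `n` costs exactly the squared
Hellinger distance between the conditional laws of `x n`, averaged against `√(P Q)` on prefixes.
That conditional distance depends on the prefix only through the parental configuration of `n`, so
Cauchy–Schwarz on each configuration `k` turns the weights into `√(Pr_P[Π_k] Pr_Q[Π_k])`. What is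
left is a bound for two Bernoulli laws, where `(√a - √b)² ≤ (a - b)² / (a + b)` suffices. This
gives the inequality with constant `1` in place of `2`.
-/

section Hellinger

lemma sq_sqrt_sub_sqrt_le_sq_sub_div_add {a b : ℝ} (ha : 0 ≤ a) (hb : 0 ≤ b) :
    (√a - √b) ^ 2 ≤ (a - b) ^ 2 / (a + b) := by
  rcases (add_nonneg ha hb).eq_or_lt' with hab | hab
  · obtain ⟨rfl, rfl⟩ := (add_eq_zero_iff_of_nonneg ha hb).1 hab
    simp
  · have hdiff : a - b = (√a - √b) * (√a + √b) := by
      linear_combination Real.sq_sqrt hb - Real.sq_sqrt ha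
    have hsum : a + b ≤ (√a + √b) ^ 2 := by
      nlinarith [Real.sq_sqrt ha, Real.sq_sqrt hb, Real.sqrt_nonneg a, Real.sqrt_nonneg b]
    rw [le_div_iff₀ hab, hdiff, mul_pow]
    gcongr

variable {D : Type*} [Fintype D] {A B : D → ℝ}

lemma hellingerSq_eq_half_sum_sq_sqrt_sub_sqrt (hA : IsProbDist A) (hB : IsProbDist B) :
    hellingerSq A B = (∑ x, (√(A x) - √(B x)) ^ 2) / 2 := by
  have hexpand (x : D) : (√(A x) - √(B x)) ^ 2 = A x + B x - 2 * √(A x * B x) := by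
    rw [Real.sqrt_mul (hA.1 x)]
    linear_combination Real.sq_sqrt (hA.1 x) + Real.sq_sqrt (hB.1 x)
  simp only [hexpand, Finset.sum_sub_distrib, Finset.sum_add_distrib, ← Finset.mul_sum, hA.2, hB.2,
    hellingerSq]
  ring

lemma hellingerSq_nonneg (hA : IsProbDist A) (hB : IsProbDist B) : 0 ≤ hellingerSq A B := by
  rw [hellingerSq_eq_half_sum_sq_sqrt_sub_sqrt hA hB]
  positivity

lemma hellingerSq_le_half_sum_sq_sub_div_add (hA : IsProbDist A) (hB : IsProbDist B) :
    hellingerSq A B ≤ (∑ x, (A x - B x) ^ 2 / (A x + B x)) / 2 := by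
  rw [hellingerSq_eq_half_sum_sq_sqrt_sub_sqrt hA hB]
  gcongr with x
  exact sq_sqrt_sub_sqrt_le_sq_sub_div_add (hA.1 x) (hB.1 x)

lemma sum_sqrt_mul_mul_le_sum_fiber {S : Type*} [Fintype S] [DecidableEq S] (c : D → S)
    {h : S → ℝ} (hA : ∀ x, 0 ≤ A x) (hB : ∀ x, 0 ≤ B x) (hh : ∀ s, 0 ≤ h s) :
    ∑ x, √(A x * B x) * h (c x) ≤
      ∑ s, √((∑ x with c x = s, A x) * ∑ x with c x = s, B x) * h s := by
  rw [← Finset.sum_fiberwise _ c]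
  refine Finset.sum_le_sum fun s _ => ?_
  calc ∑ x with c x = s, √(A x * B x) * h (c x)
      = (∑ x with c x = s, √(A x) * √(B x)) * h s := by
        rw [Finset.sum_mul]
        refine Finset.sum_congr rfl fun x hx => ?_
        rw [(Finset.mem_filter.1 hx).2, Real.sqrt_mul (hA x)]
    _ ≤ √((∑ x with c x = s, A x) * ∑ x with c x = s, B x) * h s := by
        rw [Real.sqrt_mul (Finset.sum_nonneg fun x _ => hA x)]
        gcongr
        · exact hh s
        · exact Real.sum_sqrt_mul_sqrt_le _ hA hB

end Hellinger

section Bernoulli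

/-- The Bernoulli law with success probability `t`, as a weight function on `Bool`. -/
def bernoulliWeight (t : ℝ) (b : Bool) : ℝ := if b then t else 1 - t

lemma isProbDist_bernoulliWeight {t : ℝ} (ht : t ∈ Set.Icc (0 : ℝ) 1) :
    IsProbDist (bernoulliWeight t) := by
  simpa [IsProbDist, bernoulliWeight, and_comm] using ht

lemma hellingerSq_bernoulliWeight_le {s t : ℝ} (hs : s ∈ Set.Icc (0 : ℝ) 1)
    (ht : t ∈ Set.Icc (0 : ℝ) 1) (hpos : 0 < s + t) (hlt : s + t < 2) :
    hellingerSq (bernoulliWeight s) (bernoulliWeight t) ≤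
      (s - t) ^ 2 / ((s + t) * (2 - s - t)) := by
  have hfail : 0 < 2 - s - t := by linarith
  refine (hellingerSq_le_half_sum_sq_sub_div_add (isProbDist_bernoulliWeight hs)
    (isProbDist_bernoulliWeight ht)).trans_eq ?_
  have hden : 1 - s + (1 - t) = 2 - s - t := by ring
  simp only [bernoulliWeight, Fintype.sum_bool, if_true, Bool.false_eq_true, if_false, hden]
  field_simp
  ring

end Bernoulli

lemma sum_sum_eq_card_nsmul_sum_apply {ι M : Type*} {α : ι → Type*} [Fintype ι] [DecidableEq ι]
    [∀ i, Fintype (α i)] [AddCommMonoid M] {n : ι} {φ : (∀ i, α i) → α n → M}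
    (hφ : DependsOn φ {n}ᶜ) :
    ∑ x, ∑ b, φ x b = Fintype.card (α n) • ∑ x, φ x (x n) := by
  have hinvolutive : Function.Involutive
      fun y : (∀ i, α i) × α n => (Function.update y.1 n y.2, y.1 n) :=
    fun y => by simp
  have hupdate (x : ∀ i, α i) (b : α n) : φ (Function.update x n b) = φ x :=
    hφ fun i hi => Function.update_of_ne hi b x
  rw [← Fintype.sum_prod_type', ← Equiv.sum_comp hinvolutive.toPerm, Fintype.sum_prod_type]
  simp [hupdate, Finset.sum_nsmul]

section SequentialKernels

variable {d : ℕ} {α : Fin d → Type*} [∀ i, Fintype (α i)]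

/-- The law on `∀ i, α i` whose coordinates `i < n` are drawn successively from `K i x`, the
conditional law of `x i` given the earlier coordinates, and whose coordinates `i ≥ n` are uniform.
It encodes the law of the first `n` coordinates without changing the sample space. The kernels
need not be normalized. -/
noncomputable def prefixWeight (K : ∀ i, (∀ j, α j) → α i → ℝ) (n : ℕ) (x : ∀ i, α i) : ℝ :=
  ∏ i : Fin d, if (i : ℕ) < n then K i x (x i) else (Fintype.card (α i) : ℝ)⁻¹

variable {K L : ∀ i, (∀ j, α j) → α i → ℝ}

lemma prefixWeight_last (x : ∀ i, α i) : prefixWeight K d x = ∏ i, K i x (x i) := by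
  simp [prefixWeight]

lemma prefixWeight_nonneg (hK : ∀ i x b, 0 ≤ K i x b) (n : ℕ) (x : ∀ i, α i) :
    0 ≤ prefixWeight K n x :=
  Finset.prod_nonneg fun i _ => by
    split_ifs
    exacts [hK i x _, by positivity]

lemma prefixWeight_sqrt_mul (hK : ∀ i x b, 0 ≤ K i x b) (hL : ∀ i x b, 0 ≤ L i x b) (n : ℕ)
    (x : ∀ i, α i) :
    prefixWeight (fun i x b => √(K i x b * L i x b)) n x =
      √(prefixWeight K n x * prefixWeight L n x) := by
  simp only [prefixWeight, ← Finset.prod_mul_distrib]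
  rw [Real.sqrt_prod]
  · refine Finset.prod_congr rfl fun i _ => ?_
    split_ifs
    · rfl
    · rw [Real.sqrt_mul_self (by positivity)]
  · intro i _
    split_ifs
    exacts [mul_nonneg (hK i x _) (hL i x _), by positivity]

lemma dependsOn_prefixWeight (hK : ∀ i, DependsOn (K i) (Set.Iio i)) (n : ℕ) :
    DependsOn (prefixWeight K n) {i | (i : ℕ) < n} := by
  intro x y hxy
  refine Finset.prod_congr rfl fun i _ => ?_
  split_ifs with hi
  · rw [hxy i hi, hK i fun j hj => hxy j (lt_trans hj hi)]
  · rfl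

section Nonempty

variable [∀ i, Nonempty (α i)]

lemma sum_prefixWeight_zero : ∑ x, prefixWeight K 0 x = 1 := by
  simp [prefixWeight, Finset.prod_ne_zero_iff]

lemma prefixWeight_succ (n : Fin d) (x : ∀ i, α i) :
    prefixWeight K (n + 1) x = Fintype.card (α n) * (prefixWeight K n x * K n x (x n)) := by
  have hfactor (i : Fin d) :
      (if (i : ℕ) < n + 1 then K i x (x i) else (Fintype.card (α i) : ℝ)⁻¹) =
        (if (i : ℕ) < n then K i x (x i) else (Fintype.card (α i) : ℝ)⁻¹) *
          if i = n then Fintype.card (α i) * K i x (x i) else 1 := by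
    rcases lt_trichotomy i n with hi | rfl | hi
    · simp [hi, hi.ne, Nat.lt_succ_of_lt (Fin.lt_def.1 hi)]
    · simp
    · simp [hi.not_gt, hi.ne', (Nat.succ_le_of_lt (Fin.lt_def.1 hi)).not_gt]
  simp only [prefixWeight, hfactor, Finset.prod_mul_distrib, Finset.prod_ite_eq', Finset.mem_univ,
    if_true]
  ring

lemma sum_mul_prefixWeight_succ (hK : ∀ i, DependsOn (K i) (Set.Iio i)) (n : Fin d)
    {g : (∀ i, α i) → ℝ} (hg : DependsOn g (Set.Iio n)) :
    ∑ x, g x * prefixWeight K (n + 1) x = ∑ x, g x * prefixWeight K n x * ∑ b, K n x b := by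
  have hdep : DependsOn (fun x b => g x * prefixWeight K n x * K n x b) {n}ᶜ := by
    intro x y hxy
    have hlt : ∀ i < n, x i = y i := fun i hi => hxy i hi.ne
    simp only [hg hlt, hK n hlt, dependsOn_prefixWeight hK n hlt]
  simp only [Finset.mul_sum, sum_sum_eq_card_nsmul_sum_apply hdep, prefixWeight_succ, nsmul_eq_mul]
  exact Finset.sum_congr rfl fun x _ => by ring

lemma sum_mul_prod_kernel_eq_sum_mul_prefixWeight (hK : ∀ i, DependsOn (K i) (Set.Iio i))
    (hsum : ∀ i x, ∑ b, K i x b = 1) {n : ℕ} (hn : n ≤ d) {g : (∀ i, α i) → ℝ}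
    (hg : DependsOn g {i | (i : ℕ) < n}) :
    ∑ x, g x * ∏ i, K i x (x i) = ∑ x, g x * prefixWeight K n x := by
  simp only [← prefixWeight_last]
  suffices ∀ m, n ≤ m → m ≤ d → ∑ x, g x * prefixWeight K m x = ∑ x, g x * prefixWeight K n x from
    this d hn le_rfl
  intro m hnm
  induction m, hnm using Nat.le_induction with
  | base => exact fun _ => rfl
  | succ m hnm ih =>
    intro hm
    have hgm : DependsOn g (Set.Iio (⟨m, hm⟩ : Fin d)) :=
      hg.mono fun i (hi : (i : ℕ) < n) => hi.trans_le hnm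
    simpa [hsum, ih (Nat.le_of_succ_le hm)] using sum_mul_prefixWeight_succ hK ⟨m, hm⟩ hgm

theorem hellingerSq_prod_kernel_eq_sum (hK : ∀ i, DependsOn (K i) (Set.Iio i))
    (hL : ∀ i, DependsOn (L i) (Set.Iio i)) (hK₀ : ∀ i x b, 0 ≤ K i x b)
    (hL₀ : ∀ i x b, 0 ≤ L i x b) :
    hellingerSq (fun x => ∏ i, K i x (x i)) (fun x => ∏ i, L i x (x i)) =
      ∑ n : Fin d, ∑ x, √(prefixWeight K n x * prefixWeight L n x) *
        hellingerSq (K n x) (L n x) := by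
  let W : ∀ i, (∀ j, α j) → α i → ℝ := fun i x b => √(K i x b * L i x b)
  have hW (i : Fin d) : DependsOn (W i) (Set.Iio i) := fun x y hxy => by
    simp only [W, hK i hxy, hL i hxy]
  have hstep (n : Fin d) : ∑ x, prefixWeight W n x - ∑ x, prefixWeight W (n + 1) x =
      ∑ x, prefixWeight W n x * hellingerSq (K n x) (L n x) := by
    have hsucc := sum_mul_prefixWeight_succ hW n (g := fun _ => 1) fun _ _ _ => rfl
    simp only [one_mul] at hsucc
    simp only [hsucc, ← Finset.sum_sub_distrib, hellingerSq, W, mul_sub, mul_one]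
  calc hellingerSq (fun x => ∏ i, K i x (x i)) (fun x => ∏ i, L i x (x i))
      = ∑ x, prefixWeight W 0 x - ∑ x, prefixWeight W d x := by
        rw [sum_prefixWeight_zero]
        simp only [hellingerSq, W, prefixWeight_sqrt_mul hK₀ hL₀, prefixWeight_last]
    _ = ∑ n : Fin d, (∑ x, prefixWeight W n x - ∑ x, prefixWeight W (n + 1) x) := by
        rw [← Finset.sum_range_sub' (fun n => ∑ x, prefixWeight W n x), Finset.sum_range]
    _ = _ := by
        simp only [hstep]
        simp only [W, prefixWeight_sqrt_mul hK₀ hL₀]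

end Nonempty

end SequentialKernels

section BayesianNetwork

variable {d : ℕ} {Par : Fin d → Finset (Fin d)} {p q : BNIdx d Par → ℝ}

/-- The conditional law of node `i` of the Bayesian network `P_p` given its parents, as a kernel
from all of `{0,1}^d` that reads only the parents' values. -/
def bnKernel (Par : Fin d → Finset (Fin d)) (p : BNIdx d Par → ℝ) (i : Fin d) (x : Fin d → Bool) :
    Bool → ℝ :=
  bernoulliWeight (p ⟨i, cfgOf Par x i⟩)

lemma bnDist_eq_prod_bnKernel : bnDist Par p = fun x => ∏ i, bnKernel Par p i x (x i) := rfl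

lemma isProbDist_bnKernel (hp : ∀ k, p k ∈ Set.Icc (0 : ℝ) 1) (i : Fin d) (x : Fin d → Bool) :
    IsProbDist (bnKernel Par p i x) :=
  isProbDist_bernoulliWeight (hp _)

lemma dependsOn_cfgOf (hpar : ∀ i, ∀ j ∈ Par i, j < i) (i : Fin d) :
    DependsOn (fun x => cfgOf Par x i) (Set.Iio i) :=
  fun _ _ hxy => funext fun j => hxy j (hpar i j j.2)

lemma dependsOn_bnKernel (hpar : ∀ i, ∀ j ∈ Par i, j < i) (i : Fin d) :
    DependsOn (bnKernel Par p i) (Set.Iio i) :=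
  fun _ _ hxy => congrArg (fun a => bernoulliWeight (p ⟨i, a⟩)) (dependsOn_cfgOf hpar i hxy)

lemma prCfg_bnDist_eq_sum_prefixWeight (hpar : ∀ i, ∀ j ∈ Par i, j < i)
    (hp : ∀ k, p k ∈ Set.Icc (0 : ℝ) 1) (k : BNIdx d Par) :
    prCfg Par (bnDist Par p) k =
      ∑ x with cfgOf Par x k.1 = k.2, prefixWeight (bnKernel Par p) k.1 x := by
  have hdep : DependsOn (fun x => if cfgOf Par x k.1 = k.2 then (1 : ℝ) else 0) (Set.Iio k.1) :=
    fun x y hxy => congrArg (fun a => if a = k.2 then (1 : ℝ) else 0) (dependsOn_cfgOf hpar k.1 hxy)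
  simpa [prCfg, bnDist_eq_prod_bnKernel, Finset.sum_filter] using
    sum_mul_prod_kernel_eq_sum_mul_prefixWeight (dependsOn_bnKernel (p := p) hpar)
      (fun i x => (isProbDist_bnKernel hp i x).2) k.1.2.le hdep

theorem hellingerSq_bnDist_le_sum_hellingerSq (hpar : ∀ i, ∀ j ∈ Par i, j < i)
    (hp : ∀ k, p k ∈ Set.Icc (0 : ℝ) 1) (hq : ∀ k, q k ∈ Set.Icc (0 : ℝ) 1) :
    hellingerSq (bnDist Par p) (bnDist Par q) ≤
      ∑ k, √(prCfg Par (bnDist Par p) k * prCfg Par (bnDist Par q) k) *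
        hellingerSq (bernoulliWeight (p k)) (bernoulliWeight (q k)) := by
  have hP := fun i x => (isProbDist_bnKernel hp i x).1
  have hQ := fun i x => (isProbDist_bnKernel hq i x).1
  simp only [prCfg_bnDist_eq_sum_prefixWeight hpar hp, prCfg_bnDist_eq_sum_prefixWeight hpar hq]
  rw [bnDist_eq_prod_bnKernel, bnDist_eq_prod_bnKernel,
    hellingerSq_prod_kernel_eq_sum (dependsOn_bnKernel hpar) (dependsOn_bnKernel hpar) hP hQ,
    Fintype.sum_sigma]
  exact Finset.sum_le_sum fun n _ =>
    sum_sqrt_mul_mul_le_sum_fiber (fun x => cfgOf Par x n)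
      (h := fun a => hellingerSq (bernoulliWeight (p ⟨n, a⟩)) (bernoulliWeight (q ⟨n, a⟩)))
      (prefixWeight_nonneg hP n) (prefixWeight_nonneg hQ n)
      fun a => hellingerSq_nonneg (isProbDist_bernoulliWeight (hp _))
        (isProbDist_bernoulliWeight (hq _))

theorem hellinger_sq_le_sum_over_configs_general (hpar : ∀ i, ∀ j ∈ Par i, j < i)
    (hp : ∀ k, p k ∈ Set.Icc (0 : ℝ) 1) (hq : ∀ k, q k ∈ Set.Icc (0 : ℝ) 1)
    (hpq : ∀ k, 0 < p k + q k ∧ p k + q k < 2) :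
    hellingerSq (bnDist Par p) (bnDist Par q) ≤
      ∑ k, √(prCfg Par (bnDist Par p) k * prCfg Par (bnDist Par q) k) *
        ((p k - q k) ^ 2 / ((p k + q k) * (2 - p k - q k))) := by
  refine (hellingerSq_bnDist_le_sum_hellingerSq hpar hp hq).trans ?_
  gcongr with k
  exact hellingerSq_bernoulliWeight_le (hp k) (hq k) (hpq k).1 (hpq k).2

end BayesianNetwork

theorem hellinger_sq_le_sum_over_configs
    (d : ℕ) (hd : 1 ≤ d) (Par : Fin d → Finset (Fin d))
    (hpar : ∀ i : Fin d, ∀ j ∈ Par i, j < i)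
    (p q : BNIdx d Par → ℝ)
    (hp : ∀ k, p k ∈ Set.Icc (0:ℝ) 1) (hq : ∀ k, q k ∈ Set.Icc (0:ℝ) 1)
    (hpq : ∀ k, 0 < p k + q k ∧ p k + q k < 2) :
    hellingerSq (bnDist Par p) (bnDist Par q) ≤
      2 * ∑ k : BNIdx d Par,
        Real.sqrt (prCfg Par (bnDist Par p) k * prCfg Par (bnDist Par q) k) *
          ((p k - q k) ^ 2 / ((p k + q k) * (2 - p k - q k))) := by
  refine (hellinger_sq_le_sum_over_configs_general hpar hp hq hpq).trans
    (le_mul_of_one_le_left (Finset.sum_nonneg fun k _ => ?_) one_le_two)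
  have hsucc : 0 < p k + q k := (hpq k).1
  have hfail : 0 < 2 - p k - q k := by linarith [(hpq k).2]
  positivity
end

section
/- For every q ∈ ℝ^S, every j ∈ {1,…,d}, and every x, y ∈ {0,1}^d: (a) if x_i = y_i for all i ≤ j, then F(x,q)_{i,a} = F(y,q)_{i,a} for all (i,a) ∈ S with i ≤ j; and (b) conversely, if F(x,q)_{i,a} = F(y,q)_{i,a} for all (i,a) ∈ S with i ≤ j, then x_i = y_i for all i ≤ j. -/
open scoped BigOperators Classical

/- A coordinate `x i` can be read off `F(x, q)` at the entry `(i, a)` with `a` the parental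
configuration of `x`. The difficulty is that `x` and `y` may activate different entries of block
`i`, where a coincidence with `q` could hide `x i ≠ y i`; recovering the coordinates parents first
rules this out, since by then the parental configurations of `x` and `y` at `i` are known to
agree. -/

section Ancestral

variable {ι : Type*} {Par : ι → Finset ι}

/-- Ancestral sets of nodes, i.e. sets containing the parents of each of their members. They replace
the prefixes `{1, …, j}`, which depend on the numbering of the nodes. -/
def IsAncestral (Par : ι → Finset ι) (A : Set ι) : Prop :=
  ∀ ⦃i⦄, i ∈ A → ↑(Par i) ⊆ A

theorem isAncestral_Iic [Preorder ι] (hpar : ∀ i, ∀ l ∈ Par i, l < i) (j : ι) :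
    IsAncestral Par (Set.Iic j) :=
  fun i hi l hl => (hpar i l hl).le.trans hi

theorem wellFounded_mem_parents [LT ι] [WellFoundedLT ι] (hpar : ∀ i, ∀ l ∈ Par i, l < i) :
    WellFounded fun l i => l ∈ Par i :=
  Subrelation.wf (hpar _ _) wellFounded_lt

end Ancestral

section Fvec

variable {d : ℕ} {Par : Fin d → Finset (Fin d)} {x y : Fin d → Bool} {A : Set (Fin d)}

theorem cfgOf_eq_of_eqOn {i : Fin d} (h : Set.EqOn x y (Par i)) :
    cfgOf Par x i = cfgOf Par y i :=
  funext fun l => h l.2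

theorem Fvec_congr (q : BNIdx d Par → ℝ) {k : BNIdx d Par}
    (hcfg : cfgOf Par x k.1 = cfgOf Par y k.1) (hk : x k.1 = y k.1) :
    Fvec Par x q k = Fvec Par y q k := by
  simp only [Fvec, hcfg, hk]

theorem Fvec_of_cfgOf_eq (q : BNIdx d Par → ℝ) {k : BNIdx d Par} (h : cfgOf Par x k.1 = k.2) :
    Fvec Par x q k = if x k.1 then 1 else 0 :=
  if_pos h

theorem eq_of_Fvec_eq_of_cfgOf_eq {q : BNIdx d Par → ℝ} {k : BNIdx d Par}
    (hx : cfgOf Par x k.1 = k.2) (hy : cfgOf Par y k.1 = k.2)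
    (hF : Fvec Par x q k = Fvec Par y q k) : x k.1 = y k.1 := by
  rw [Fvec_of_cfgOf_eq q hx, Fvec_of_cfgOf_eq q hy] at hF
  cases hxk : x k.1 <;> cases hyk : y k.1 <;> simp [hxk, hyk] at hF ⊢

theorem IsAncestral.Fvec_eqOn (hA : IsAncestral Par A) (q : BNIdx d Par → ℝ)
    (h : Set.EqOn x y A) : Set.EqOn (Fvec Par x q) (Fvec Par y q) (Sigma.fst ⁻¹' A) :=
  fun _ hk => Fvec_congr q (cfgOf_eq_of_eqOn (h.mono (hA hk))) (h hk)

theorem IsAncestral.eqOn_of_Fvec_eqOn (hA : IsAncestral Par A)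
    (hwf : WellFounded fun l i => l ∈ Par i) {q : BNIdx d Par → ℝ}
    (hF : Set.EqOn (Fvec Par x q) (Fvec Par y q) (Sigma.fst ⁻¹' A)) : Set.EqOn x y A := by
  intro i
  induction i using hwf.induction with
  | h i ih =>
    intro hi
    have hcfg : cfgOf Par x i = cfgOf Par y i :=
      cfgOf_eq_of_eqOn fun l hl => ih l hl (hA hi hl)
    have hFi : Fvec Par x q ⟨i, cfgOf Par y i⟩ = Fvec Par y q ⟨i, cfgOf Par y i⟩ := hF hi
    exact eq_of_Fvec_eq_of_cfgOf_eq hcfg rfl hFi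

theorem Fvec_determines_and_is_determined_by_prefix_general (hA : IsAncestral Par A)
    (hwf : WellFounded fun l i => l ∈ Par i) (q : BNIdx d Par → ℝ) (x y : Fin d → Bool) :
    Set.EqOn x y A ↔ Set.EqOn (Fvec Par x q) (Fvec Par y q) (Sigma.fst ⁻¹' A) :=
  ⟨hA.Fvec_eqOn q, hA.eqOn_of_Fvec_eqOn hwf⟩

end Fvec

theorem Fvec_determines_and_is_determined_by_prefix
    (d : ℕ) (hd : 1 ≤ d) (Par : Fin d → Finset (Fin d))
    (hpar : ∀ i : Fin d, ∀ j ∈ Par i, j < i)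
    (q : BNIdx d Par → ℝ) (j : Fin d) (x y : Fin d → Bool) :
    ((∀ i : Fin d, i ≤ j → x i = y i) →
        ∀ k : BNIdx d Par, k.1 ≤ j → Fvec Par x q k = Fvec Par y q k) ∧
    ((∀ k : BNIdx d Par, k.1 ≤ j → Fvec Par x q k = Fvec Par y q k) →
        ∀ i : Fin d, i ≤ j → x i = y i) :=
  iff_iff_implies_and_implies.mp <| Fvec_determines_and_is_determined_by_prefix_general
    (isAncestral_Iic hpar j) (wellFounded_mem_parents hpar) q x y
end

section
/- Let p ∈ [0,1]^S and P = P_p. Then E_{X∼P}[F(X,p)] = p, and the covariance matrix of F(X,p) is diagonal: for all k ≠ l in {1,…,m}, E_{X∼P}[(F(X,p)_k − p_k)(F(X,p)_l − p_l)] = 0, and for each k, E_{X∼P}[(F(X,p)_k − p_k)²] = Pr_P[Π_k]·p_k·(1 − p_k). -/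
open scoped BigOperators Classical

/-!
A product of weights `w₀(x₀), w₁(x₀, x₁), …`, each summing to one over its newest coordinate, has
total mass one: this is the only computation needed. If `f` depends on the coordinates up to `i` and
has mean zero under `wᵢ` given the earlier ones, then `wᵢ (1 + f)` is again a normalized weight, and
comparing the two total masses shows that `f` has mean zero. In particular `F(X, p)_k - p_k`, with
`k = (i, a)`, is orthogonal to every function of the coordinates before `i`. The mean and the
covariances follow at once, and the variances after reducing the square by `xᵢ ^ 2 = xᵢ`.
-/

section SequentialWeights

variable {d : ℕ} {α : Fin d → Type*} [∀ i, Fintype (α i)] [∀ i, Nonempty (α i)]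

theorem sum_prod_eq_one_of_dependsOn_Iic {R : Type*} [CommSemiring R]
    {w : Fin d → (∀ i, α i) → R} (hw : ∀ i, DependsOn (w i) (Set.Iic i))
    (hw_sum : ∀ i x, ∑ b, w i (Function.update x i b) = 1) :
    ∑ x, ∏ i, w i x = 1 := by
  induction d with
  | zero => simp
  | succ d ih =>
    obtain ⟨x₀⟩ : Nonempty (∀ i, α i) := inferInstance
    have first_weight (a : α 0) (y : ∀ i : Fin d, α i.succ) :
        w 0 (Fin.cons a y) = w 0 (Function.update x₀ 0 a) := by
      refine hw 0 fun j hj ↦ ?_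
      obtain rfl : j = 0 := Fin.le_zero_iff.mp hj
      simp
    have later_weights (a : α 0) :
        ∑ y : ∀ i : Fin d, α i.succ, ∏ i : Fin d, w i.succ (Fin.cons a y) = 1 := by
      refine ih (w := fun i y ↦ w i.succ (Fin.cons a y)) (fun i y z hyz ↦ ?_) (fun i y ↦ ?_)
      · refine hw i.succ fun j hj ↦ ?_
        cases j using Fin.cases with
        | zero => rfl
        | succ j => exact hyz j (Fin.succ_le_succ_iff.mp hj)
      · simpa only [Fin.cons_update] using hw_sum i.succ (Fin.cons a y)
    calc ∑ x, ∏ i, w i x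
        = ∑ a, ∑ y : ∀ i : Fin d, α i.succ,
            w 0 (Fin.cons a y) * ∏ i : Fin d, w i.succ (Fin.cons a y) := by
          rw [← (Fin.consEquiv α).sum_comp, Fintype.sum_prod_type]
          simp only [Fin.prod_univ_succ]
          rfl
      _ = ∑ a, w 0 (Function.update x₀ 0 a) := by
          simp only [first_weight, ← Finset.mul_sum, later_weights, mul_one]
      _ = 1 := hw_sum 0 x₀

theorem sum_prod_mul_eq_zero_of_dependsOn_Iic {R : Type*} [CommRing R]
    {w : Fin d → (∀ i, α i) → R} (hw : ∀ i, DependsOn (w i) (Set.Iic i))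
    (hw_sum : ∀ i x, ∑ b, w i (Function.update x i b) = 1)
    {i : Fin d} {f : (∀ i, α i) → R} (hf : DependsOn f (Set.Iic i))
    (hf_sum : ∀ x, ∑ b, w i (Function.update x i b) * f (Function.update x i b) = 0) :
    ∑ x, (∏ j, w j x) * f x = 0 := by
  let tilted (j : Fin d) (x : ∀ i, α i) : R := w j x * if j = i then 1 + f x else 1
  have tilted_dependsOn (j : Fin d) : DependsOn (tilted j) (Set.Iic j) := by
    intro x y hxy
    rcases eq_or_ne j i with rfl | hji
    · simp only [tilted, hw j hxy, hf hxy]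
    · simp only [tilted, hw j hxy, if_neg hji]
  have tilted_sum (j : Fin d) (x : ∀ i, α i) : ∑ b, tilted j (Function.update x j b) = 1 := by
    rcases eq_or_ne j i with rfl | hji
    · simp only [tilted, if_true, mul_add, mul_one, Finset.sum_add_distrib, hw_sum, hf_sum,
        add_zero]
    · simp only [tilted, if_neg hji, mul_one, hw_sum]
  have prod_tilted (x : ∀ i, α i) : ∏ j, tilted j x = ∏ j, w j x + (∏ j, w j x) * f x := by
    simp only [tilted, Finset.prod_mul_distrib, Finset.prod_ite_eq', Finset.mem_univ, if_true,
      mul_add, mul_one]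
  have total_mass := sum_prod_eq_one_of_dependsOn_Iic tilted_dependsOn tilted_sum
  rwa [Finset.sum_congr rfl fun x _ ↦ prod_tilted x, Finset.sum_add_distrib,
    sum_prod_eq_one_of_dependsOn_Iic hw hw_sum, add_eq_left] at total_mass

end SequentialWeights

section Expectation

variable {d : ℕ} (R : (Fin d → Bool) → ℝ)

theorem expec_add (g h : (Fin d → Bool) → ℝ) :
    expec R (fun x ↦ g x + h x) = expec R g + expec R h := by
  simp only [expec, mul_add, Finset.sum_add_distrib]

theorem expec_mul_const (g : (Fin d → Bool) → ℝ) (c : ℝ) :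
    expec R (fun x ↦ g x * c) = expec R g * c := by
  simp only [expec, Finset.sum_mul, mul_assoc]

theorem expec_indicator_cfgOf (Par : Fin d → Finset (Fin d)) (k : BNIdx d Par) :
    expec R (fun x ↦ if cfgOf Par x k.1 = k.2 then 1 else 0) = prCfg Par R k := by
  simp only [expec, prCfg, mul_ite, mul_one, mul_zero]

end Expectation

section BayesianNetwork

variable {d : ℕ} {Par : Fin d → Finset (Fin d)}

/-- The conditional probability `p_{i,a}^{x_i} (1 - p_{i,a})^{1 - x_i}`, with `a = a(i, x)`, of the
value `x_i` given the parents of `i`; these are the factors of `bnDist`. -/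
noncomputable def condProb (p : BNIdx d Par → ℝ) (i : Fin d) (x : Fin d → Bool) : ℝ :=
  if x i then p ⟨i, cfgOf Par x i⟩ else 1 - p ⟨i, cfgOf Par x i⟩

theorem bnDist_eq_prod_condProb (p : BNIdx d Par → ℝ) (x : Fin d → Bool) :
    bnDist Par p x = ∏ i, condProb p i x :=
  rfl

theorem Fvec_sub_self_of_eq (p : BNIdx d Par → ℝ) {k : BNIdx d Par} {x : Fin d → Bool}
    (hx : cfgOf Par x k.1 = k.2) : Fvec Par x p k - p k = (if x k.1 then 1 else 0) - p k := by
  rw [Fvec, if_pos hx]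

theorem Fvec_sub_self_of_ne (p : BNIdx d Par → ℝ) {k : BNIdx d Par} {x : Fin d → Bool}
    (hx : cfgOf Par x k.1 ≠ k.2) : Fvec Par x p k - p k = 0 := by
  rw [Fvec, if_neg hx, sub_self]

theorem Fvec_sub_self_mul_eq_zero_of_fst_eq (p : BNIdx d Par → ℝ) {k l : BNIdx d Par}
    (hkl : k ≠ l) (hfst : k.1 = l.1) (x : Fin d → Bool) :
    (Fvec Par x p k - p k) * (Fvec Par x p l - p l) = 0 := by
  obtain ⟨i, a⟩ := k
  obtain ⟨j, b⟩ := l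
  obtain rfl : i = j := hfst
  by_cases ha : cfgOf Par x i = a
  · have hb : cfgOf Par x i ≠ b := fun hb ↦ hkl (by rw [← ha, ← hb])
    rw [Fvec_sub_self_of_ne p (k := ⟨i, b⟩) hb, mul_zero]
  · rw [Fvec_sub_self_of_ne p (k := ⟨i, a⟩) ha, zero_mul]

theorem Fvec_sub_self_sq (p : BNIdx d Par → ℝ) (k : BNIdx d Par) (x : Fin d → Bool) :
    (Fvec Par x p k - p k) ^ 2 =
      (1 - 2 * p k) * (Fvec Par x p k - p k) +
        (if cfgOf Par x k.1 = k.2 then 1 else 0) * (p k * (1 - p k)) := by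
  by_cases hx : cfgOf Par x k.1 = k.2
  · rw [Fvec_sub_self_of_eq p hx, if_pos hx]
    split_ifs <;> ring
  · simp only [Fvec_sub_self_of_ne p hx, if_neg hx]
    ring

variable (hpar : ∀ i : Fin d, ∀ j ∈ Par i, j < i)
include hpar

theorem cfgOf_dependsOn_Iio (i : Fin d) : DependsOn (fun x ↦ cfgOf Par x i) (Set.Iio i) :=
  fun _ _ hxy ↦ funext fun j ↦ hxy j (hpar i j j.2)

theorem cfgOf_update_self (i : Fin d) (x : Fin d → Bool) (b : Bool) :
    cfgOf Par (Function.update x i b) i = cfgOf Par x i :=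
  cfgOf_dependsOn_Iio hpar i fun _ hj ↦ Function.update_of_ne (ne_of_lt hj) b x

theorem condProb_dependsOn_Iic (p : BNIdx d Par → ℝ) (i : Fin d) :
    DependsOn (condProb p i) (Set.Iic i) := by
  intro x y hxy
  have hcfg : cfgOf Par x i = cfgOf Par y i :=
    (cfgOf_dependsOn_Iio hpar i).mono Set.Iio_subset_Iic_self hxy
  rw [condProb, condProb, hcfg, hxy i Set.self_mem_Iic]

theorem condProb_update_self (p : BNIdx d Par → ℝ) (i : Fin d) (x : Fin d → Bool) (b : Bool) :
    condProb p i (Function.update x i b) =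
      if b then p ⟨i, cfgOf Par x i⟩ else 1 - p ⟨i, cfgOf Par x i⟩ := by
  rw [condProb, cfgOf_update_self hpar, Function.update_self]

theorem sum_condProb_update_self (p : BNIdx d Par → ℝ) (i : Fin d) (x : Fin d → Bool) :
    ∑ b, condProb p i (Function.update x i b) = 1 := by
  simp [condProb_update_self hpar]

theorem Fvec_dependsOn_Iic (p : BNIdx d Par → ℝ) (k : BNIdx d Par) :
    DependsOn (fun x ↦ Fvec Par x p k) (Set.Iic k.1) := by
  intro x y hxy
  have hcfg : cfgOf Par x k.1 = cfgOf Par y k.1 :=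
    (cfgOf_dependsOn_Iio hpar k.1).mono Set.Iio_subset_Iic_self hxy
  simp only [Fvec, hcfg, hxy k.1 Set.self_mem_Iic]

theorem sum_condProb_mul_Fvec_sub_self_update (p : BNIdx d Par → ℝ) (k : BNIdx d Par)
    (x : Fin d → Bool) :
    ∑ b, condProb p k.1 (Function.update x k.1 b) *
      (Fvec Par (Function.update x k.1 b) p k - p k) = 0 := by
  have hcfg := cfgOf_update_self hpar k.1 x
  by_cases hx : cfgOf Par x k.1 = k.2
  · simp only [condProb_update_self hpar, Fvec_sub_self_of_eq p ((hcfg _).trans hx), hx,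
      Function.update_self, Fintype.sum_bool, if_true, Bool.false_eq_true, if_false]
    ring
  · simp only [Fvec_sub_self_of_ne p fun h ↦ hx ((hcfg _).symm.trans h), mul_zero,
      Finset.sum_const_zero]

theorem expec_bnDist_const (p : BNIdx d Par → ℝ) (c : ℝ) :
    expec (bnDist Par p) (fun _ ↦ c) = c := by
  simp only [expec, bnDist_eq_prod_condProb, ← Finset.sum_mul,
    sum_prod_eq_one_of_dependsOn_Iic (condProb_dependsOn_Iic hpar p)
      (sum_condProb_update_self hpar p), one_mul]

theorem expec_mul_Fvec_sub_self_eq_zero (p : BNIdx d Par → ℝ) {k : BNIdx d Par}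
    {g : (Fin d → Bool) → ℝ} (hg : DependsOn g (Set.Iio k.1)) :
    expec (bnDist Par p) (fun x ↦ g x * (Fvec Par x p k - p k)) = 0 := by
  refine sum_prod_mul_eq_zero_of_dependsOn_Iic (condProb_dependsOn_Iic hpar p)
    (sum_condProb_update_self hpar p) (i := k.1) (fun x y hxy ↦ ?_) (fun x ↦ ?_)
  · have hF : Fvec Par x p k = Fvec Par y p k := Fvec_dependsOn_Iic hpar p k hxy
    rw [hg.mono Set.Iio_subset_Iic_self hxy, hF]
  · have hg_update (b : Bool) : g (Function.update x k.1 b) = g x :=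
      hg fun _ hj ↦ Function.update_of_ne (ne_of_lt hj) b x
    simp only [hg_update, mul_left_comm _ (g x), ← Finset.mul_sum,
      sum_condProb_mul_Fvec_sub_self_update hpar, mul_zero]

theorem expec_Fvec (p : BNIdx d Par → ℝ) (k : BNIdx d Par) :
    expec (bnDist Par p) (fun x ↦ Fvec Par x p k) = p k := by
  have centered := expec_mul_Fvec_sub_self_eq_zero hpar p (k := k) (g := fun _ ↦ 1)
    ((dependsOn_const 1).mono (Set.empty_subset _))
  calc expec (bnDist Par p) (fun x ↦ Fvec Par x p k)
      = expec (bnDist Par p) (fun x ↦ 1 * (Fvec Par x p k - p k) + p k) := by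
        simp only [one_mul, sub_add_cancel]
    _ = p k := by rw [expec_add, centered, expec_bnDist_const hpar, zero_add]

theorem expec_Fvec_sub_self_mul_of_fst_lt (p : BNIdx d Par → ℝ) {k l : BNIdx d Par}
    (hkl : k.1 < l.1) :
    expec (bnDist Par p) (fun x ↦ (Fvec Par x p k - p k) * (Fvec Par x p l - p l)) = 0 := by
  refine expec_mul_Fvec_sub_self_eq_zero hpar p fun x y hxy ↦ ?_
  have hF : Fvec Par x p k = Fvec Par y p k :=
    (Fvec_dependsOn_Iic hpar p k).mono (Set.Iic_subset_Iio.mpr hkl) hxy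
  rw [hF]

theorem expec_Fvec_sub_self_mul_of_ne (p : BNIdx d Par → ℝ) {k l : BNIdx d Par} (hkl : k ≠ l) :
    expec (bnDist Par p) (fun x ↦ (Fvec Par x p k - p k) * (Fvec Par x p l - p l)) = 0 := by
  rcases lt_trichotomy k.1 l.1 with hlt | heq | hgt
  · exact expec_Fvec_sub_self_mul_of_fst_lt hpar p hlt
  · simp only [Fvec_sub_self_mul_eq_zero_of_fst_eq p hkl heq, expec_bnDist_const hpar]
  · simpa only [mul_comm] using expec_Fvec_sub_self_mul_of_fst_lt hpar p hgt

theorem expec_Fvec_sub_self_sq (p : BNIdx d Par → ℝ) (k : BNIdx d Par) :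
    expec (bnDist Par p) (fun x ↦ (Fvec Par x p k - p k) ^ 2) =
      prCfg Par (bnDist Par p) k * p k * (1 - p k) := by
  have linear_part := expec_mul_Fvec_sub_self_eq_zero hpar p (k := k) (g := fun _ ↦ 1 - 2 * p k)
    ((dependsOn_const _).mono (Set.empty_subset _))
  simp only [Fvec_sub_self_sq, expec_add, linear_part, expec_mul_const, expec_indicator_cfgOf,
    zero_add, mul_assoc]

end BayesianNetwork

theorem Fvec_mean_and_diagonal_covariance_general
    {d : ℕ} {Par : Fin d → Finset (Fin d)} (hpar : ∀ i : Fin d, ∀ j ∈ Par i, j < i)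
    (p : BNIdx d Par → ℝ) :
    (∀ k : BNIdx d Par, expec (bnDist Par p) (fun x => Fvec Par x p k) = p k) ∧
    (∀ k l : BNIdx d Par, k ≠ l →
      expec (bnDist Par p)
        (fun x => (Fvec Par x p k - p k) * (Fvec Par x p l - p l)) = 0) ∧
    (∀ k : BNIdx d Par,
      expec (bnDist Par p) (fun x => (Fvec Par x p k - p k) ^ 2)
        = prCfg Par (bnDist Par p) k * p k * (1 - p k)) :=
  ⟨expec_Fvec hpar p, fun _ _ hkl ↦ expec_Fvec_sub_self_mul_of_ne hpar p hkl,
    expec_Fvec_sub_self_sq hpar p⟩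

theorem Fvec_mean_and_diagonal_covariance
    (d : ℕ) (hd : 1 ≤ d) (Par : Fin d → Finset (Fin d))
    (hpar : ∀ i : Fin d, ∀ j ∈ Par i, j < i)
    (p : BNIdx d Par → ℝ) (hp : ∀ k, p k ∈ Set.Icc (0:ℝ) 1) :
    (∀ k : BNIdx d Par, expec (bnDist Par p) (fun x => Fvec Par x p k) = p k) ∧
    (∀ k l : BNIdx d Par, k ≠ l →
      expec (bnDist Par p)
        (fun x => (Fvec Par x p k - p k) * (Fvec Par x p l - p l)) = 0) ∧
    (∀ k : BNIdx d Par,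
      expec (bnDist Par p) (fun x => (Fvec Par x p k - p k) ^ 2)
        = prCfg Par (bnDist Par p) k * p k * (1 - p k)) :=
  Fvec_mean_and_diagonal_covariance_general hpar p
end

section
/- Let P and Q be probability distributions on a finite set D with P ≠ Q. Then there exist probability distributions E and L on D with disjoint supports such that for all x ∈ D: (i) Q(x) = P(x) + d_TV(P,Q)·E(x) − d_TV(P,Q)·L(x), and (ii) d_TV(P,Q)·L(x) ≤ P(x). -/
/-!
Both error distributions come from the Jordan decomposition of `Q - P`: `(Q - P)⁺` and `(P - Q)⁺`
are disjointly supported and have difference `Q - P` and sum `|P - Q|`. Since `P` and `Q` have the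
same total mass, the two parts have the same mass too, so it is `dTV P Q`, and dividing by it
normalizes both.
-/

open scoped BigOperators Classical

theorem posPart_sub_le_self {α : Type*} [Lattice α] [AddCommGroup α] [AddLeftMono α] {a b : α}
    (ha : 0 ≤ a) (hb : 0 ≤ b) : (a - b)⁺ ≤ a :=
  sup_le (sub_le_self a hb) ha

theorem posPart_sub_sub_posPart_sub_rev {α : Type*} [Lattice α] [AddCommGroup α] [AddLeftMono α]
    (a b : α) : (a - b)⁺ - (b - a)⁺ = a - b := by
  rw [← neg_sub a b, posPart_neg, posPart_sub_negPart]

theorem posPart_sub_eq_zero_or_posPart_sub_rev_eq_zero {α : Type*} [LinearOrder α]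
    [AddCommGroup α] [AddLeftMono α] (a b : α) : (a - b)⁺ = 0 ∨ (b - a)⁺ = 0 := by
  simpa only [posPart_eq_zero, sub_nonpos] using le_total a b

section

variable {D : Type*} [Fintype D] {A B : D → ℝ}

theorem dTV_comm (A B : D → ℝ) : dTV A B = dTV B A := by
  simp only [dTV, abs_sub_comm]

theorem dTV_pos (hAB : A ≠ B) : 0 < dTV A B := by
  obtain ⟨x, hx⟩ := Function.ne_iff.mp hAB
  have sum_pos : 0 < ∑ x, |A x - B x| :=
    Finset.sum_pos' (fun _ _ ↦ abs_nonneg _)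
      ⟨x, Finset.mem_univ x, abs_pos.mpr (sub_ne_zero.mpr hx)⟩
  exact half_pos sum_pos

theorem sum_posPart_sub_eq_dTV (hmass : ∑ x, A x = ∑ x, B x) :
    ∑ x, (A x - B x)⁺ = dTV A B := by
  have sum_sub : ∑ x, (A x - B x) = 0 := by
    rw [Finset.sum_sub_distrib, hmass, sub_self]
  have two_mul_sum : 2 * ∑ x, (A x - B x)⁺ = ∑ x, |A x - B x| := by
    calc 2 * ∑ x, (A x - B x)⁺
        = ∑ x, (|A x - B x| + (A x - B x)) := by
          simp only [abs_add_eq_two_nsmul_posPart, nsmul_eq_mul, Nat.cast_ofNat, Finset.mul_sum]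
      _ = ∑ x, |A x - B x| := by rw [Finset.sum_add_distrib, sum_sub, add_zero]
  rw [dTV, ← two_mul_sum, mul_div_cancel_left₀ _ two_ne_zero]

/-- The normalized excess of `A` over `B`: the positive part of `A - B`, scaled so as to be a
probability distribution when `A` and `B` are distinct and have equal total mass. It is
identically `0` when `A = B`. -/
noncomputable def normalizedExcess (A B : D → ℝ) (x : D) : ℝ :=
  (A x - B x)⁺ / dTV A B

theorem isProbDist_normalizedExcess (hmass : ∑ x, A x = ∑ x, B x) (hAB : A ≠ B) :
    IsProbDist (normalizedExcess A B) := by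
  refine ⟨fun x ↦ div_nonneg (posPart_nonneg _) (dTV_pos hAB).le, ?_⟩
  simp only [normalizedExcess]
  rw [← Finset.sum_div, sum_posPart_sub_eq_dTV hmass, div_self (dTV_pos hAB).ne']

theorem normalizedExcess_eq_zero_or_rev_eq_zero (A B : D → ℝ) (x : D) :
    normalizedExcess A B x = 0 ∨ normalizedExcess B A x = 0 :=
  (posPart_sub_eq_zero_or_posPart_sub_rev_eq_zero (A x) (B x)).imp
    (fun h ↦ by rw [normalizedExcess, h, zero_div])
    (fun h ↦ by rw [normalizedExcess, h, zero_div])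

theorem dTV_mul_normalizedExcess (hAB : A ≠ B) (x : D) :
    dTV A B * normalizedExcess A B x = (A x - B x)⁺ :=
  mul_div_cancel₀ _ (dTV_pos hAB).ne'

end

theorem exists_disjoint_error_decomposition_general {D : Type*} [Fintype D] {P Q : D → ℝ}
    (hP : ∀ x, 0 ≤ P x) (hQ : ∀ x, 0 ≤ Q x) (hmass : ∑ x, P x = ∑ x, Q x) (hPQ : P ≠ Q) :
    ∃ E L : D → ℝ, IsProbDist E ∧ IsProbDist L ∧
      (∀ x, E x = 0 ∨ L x = 0) ∧
      (∀ x, Q x = P x + dTV P Q * E x - dTV P Q * L x) ∧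
      (∀ x, dTV P Q * L x ≤ P x) := by
  have gain (x : D) : dTV P Q * normalizedExcess Q P x = (Q x - P x)⁺ := by
    rw [dTV_comm, dTV_mul_normalizedExcess hPQ.symm]
  have loss (x : D) : dTV P Q * normalizedExcess P Q x = (P x - Q x)⁺ :=
    dTV_mul_normalizedExcess hPQ x
  refine ⟨normalizedExcess Q P, normalizedExcess P Q,
    isProbDist_normalizedExcess hmass.symm hPQ.symm, isProbDist_normalizedExcess hmass hPQ,
    normalizedExcess_eq_zero_or_rev_eq_zero Q P, fun x ↦ ?_, fun x ↦ ?_⟩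
  · rw [gain, loss, add_sub_assoc, posPart_sub_sub_posPart_sub_rev, add_sub_cancel]
  · rw [loss]
    exact posPart_sub_le_self (hP x) (hQ x)

theorem exists_disjoint_error_decomposition
    (D : Type*) [Fintype D] (P Q : D → ℝ)
    (hP : IsProbDist P) (hQ : IsProbDist Q) (hPQ : P ≠ Q) :
    ∃ E L : D → ℝ, IsProbDist E ∧ IsProbDist L ∧
      (∀ x, E x = 0 ∨ L x = 0) ∧
      (∀ x, Q x = P x + dTV P Q * E x - dTV P Q * L x) ∧
      (∀ x, dTV P Q * L x ≤ P x) :=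
  exists_disjoint_error_decomposition_general hP.1 hQ.1 (hP.2.trans hQ.2.symm) hPQ
end

section
/- There exist universal constants C > 0 and ε₀ ∈ (0,1) such that the following holds. Let ε ∈ (0, ε₀), let p, q ∈ [0,1]^S with P = P_p, let L be a probability distribution on {0,1}^d, and let w_L, w_P be reals with 0 ≤ w_L ≤ 2ε, 0 < w_P ≤ 2, and w_L·L(x) ≤ w_P·P(x) for all x ∈ {0,1}^d. Then w_L·‖M_L‖₂ ≤ C·(ε·log(1/ε) + ε·‖p − q‖₂²). -/
open scoped BigOperators Classical

/-!
For a unit vector `v`, the quadratic form of `M_L` at `v` is the `L`-average of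
`⟨v, F(x, q) - q⟩²`, and replacing `q` by `p` costs at most a factor `2` and an additive
`2 ‖p - q‖²`. Under `P_p` the coordinates of `F(X, p) - p` form a martingale difference sequence
(sampling the nodes in topological order) with bounded increments, so `⟨v, F(X, p) - p⟩` is
sub-Gaussian. Where its square is below a suitable multiple of `log (1 / ε)`, the mass `2ε` of
`w_L L` gives `O(ε log (1 / ε))`; where it is above, `w_L L ≤ 2 P_p` and the sub-Gaussian tail of
`P_p` contributes only `O(ε)`.
-/

section RealInequalities

open ProbabilityTheory

lemma bernoulli_weight_nonneg {p : ℝ} (hp : p ∈ Set.Icc (0 : ℝ) 1) (b : Bool) :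
    0 ≤ if b then p else 1 - p := by
  split_ifs
  · exact hp.1
  · exact sub_nonneg.2 hp.2

lemma sum_bernoulli_mul_exp_le {p : ℝ} (hp : p ∈ Set.Icc (0 : ℝ) 1) (t : ℝ) :
    ∑ b : Bool, (if b then p else 1 - p) * Real.exp (t * ((if b then 1 else 0) - p)) ≤
      Real.exp (t ^ 2 / 8) := by
  let X : Bool → ℝ := fun b => if b then 1 else 0
  have hX : ∀ b, X b ∈ Set.Icc (0 : ℝ) 1 := by simp [X]
  have hsub := (hasSubgaussianMGF_of_mem_Icc (μ := Ber(true, false, (⟨p, hp⟩ : unitInterval)))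
    (measurable_of_finite X).aemeasurable (.of_forall hX)).mgf_le t
  convert hsub using 1
  · simp [mgf, integral_bernoulliMeasure, X]
  · norm_num
    ring

lemma sq_le_two_mul_sq_add_exp {r : ℝ} (hr : 0 < r) (a z : ℝ) :
    z ^ 2 ≤ 2 * a ^ 2 +
      4 / r ^ 2 * Real.exp (-(r * a)) * (Real.exp (r * z) + Real.exp (-r * z)) := by
  rcases le_total |z| a with hza | hza
  · have hsq : z ^ 2 ≤ a ^ 2 := sq_le_sq.2 (hza.trans (le_abs_self a))
    have : 0 ≤ 4 / r ^ 2 * Real.exp (-(r * a)) * (Real.exp (r * z) + Real.exp (-r * z)) := by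
      positivity
    linarith [sq_nonneg a]
  · have hexcess : 0 ≤ r * (|z| - a) := mul_nonneg hr.le (sub_nonneg.2 hza)
    calc z ^ 2 = (a + (|z| - a)) ^ 2 := by rw [add_sub_cancel, sq_abs]
      _ ≤ 2 * (a ^ 2 + (|z| - a) ^ 2) := add_sq_le
      _ = 2 * a ^ 2 + 4 / r ^ 2 * ((r * (|z| - a)) ^ 2 / 2) := by field_simp; ring
      _ ≤ 2 * a ^ 2 + 4 / r ^ 2 * Real.exp (r * (|z| - a)) := by
        gcongr
        linarith [Real.quadratic_le_exp_of_nonneg hexcess]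
      _ = 2 * a ^ 2 + 4 / r ^ 2 * Real.exp (-(r * a)) * Real.exp |r * z| := by
        rw [mul_assoc (4 / r ^ 2), ← Real.exp_add, abs_mul, abs_of_pos hr]
        ring_nf
      _ ≤ _ := by
        rw [neg_mul]
        gcongr
        exact Real.exp_abs_le _

end RealInequalities

section Sums

variable {Ω : Type*} [Fintype Ω] {P R z : Ω → ℝ} {c δ K s : ℝ}

lemma sum_mul_sq_le_add_sum_mul_exp (hR : ∀ ω, 0 ≤ R ω) (hRP : ∀ ω, R ω ≤ K * P ω)
    {r : ℝ} (hr : 0 < r) (a : ℝ) :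
    ∑ ω, R ω * z ω ^ 2 ≤ 2 * a ^ 2 * ∑ ω, R ω + 4 / r ^ 2 * Real.exp (-(r * a)) * K *
      (∑ ω, P ω * Real.exp (r * z ω) + ∑ ω, P ω * Real.exp (-r * z ω)) := by
  set A := 4 / r ^ 2 * Real.exp (-(r * a))
  simp only [Finset.mul_sum, ← Finset.sum_add_distrib]
  refine Finset.sum_le_sum fun ω _ => ?_
  set E := Real.exp (r * z ω) + Real.exp (-r * z ω)
  calc R ω * z ω ^ 2
      ≤ R ω * (2 * a ^ 2 + A * E) :=
        mul_le_mul_of_nonneg_left (sq_le_two_mul_sq_add_exp hr a _) (hR ω)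
    _ = 2 * a ^ 2 * R ω + R ω * (A * E) := by ring
    _ ≤ 2 * a ^ 2 * R ω + K * P ω * (A * E) := by
        gcongr
        exact hRP ω
    _ = _ := by ring

lemma sum_mul_sq_le_of_subgaussian (hc : 0 < c) (hs : 0 < s) (hK : 0 ≤ K)
    (hmgf : ∀ t, ∑ ω, P ω * Real.exp (t * z ω) ≤ Real.exp (c * t ^ 2 / 2))
    (hR : ∀ ω, 0 ≤ R ω) (hmass : ∑ ω, R ω ≤ δ) (hRP : ∀ ω, R ω ≤ K * P ω) :
    ∑ ω, R ω * z ω ^ 2 ≤ 4 * c * (s * δ + K / s * Real.exp (-s)) := by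
  -- `c * r` is the level at which the Chernoff bound on the `P`-tail of `z` equals `exp (-s)`.
  set r := √(2 * s / c)
  have hr : 0 < r := by positivity
  have hr_sq : r ^ 2 = 2 * s / c := Real.sq_sqrt (by positivity)
  have hexp_neg : r * (c * r) = 2 * s := by
    rw [mul_left_comm, ← sq, hr_sq, mul_div_cancel₀ _ hc.ne']
  have hexp_half : c * r ^ 2 / 2 = s := by
    rw [hr_sq]
    field_simp
  have hmgf_pos := hmgf r
  have hmgf_neg := hmgf (-r)
  rw [hexp_half] at hmgf_pos
  rw [neg_sq, hexp_half] at hmgf_neg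
  calc ∑ ω, R ω * z ω ^ 2
      ≤ 2 * (c * r) ^ 2 * ∑ ω, R ω + 4 / r ^ 2 * Real.exp (-(r * (c * r))) * K *
          (∑ ω, P ω * Real.exp (r * z ω) + ∑ ω, P ω * Real.exp (-r * z ω)) :=
        sum_mul_sq_le_add_sum_mul_exp hR hRP hr _
    _ ≤ 2 * (c * r) ^ 2 * δ + 4 / r ^ 2 * Real.exp (-(r * (c * r))) * K *
          (Real.exp s + Real.exp s) := by
        gcongr
    _ = 4 * c * (s * δ + K / s * (Real.exp (-(2 * s)) * Real.exp s)) := by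
        rw [hexp_neg, mul_pow, hr_sq]
        field_simp
        ring
    _ = 4 * c * (s * δ + K / s * Real.exp (-s)) := by
        rw [← Real.exp_add]
        ring_nf

lemma sum_prod_take_le_one {α : Type*} [Fintype α] {d : ℕ}
    (κ : (i : Fin d) → (Fin i → α) → α → ℝ) (hκ : ∀ i y a, 0 ≤ κ i y a)
    (hsum : ∀ i y, ∑ a, κ i y a ≤ 1) :
    ∑ x : Fin d → α, ∏ i, κ i (Fin.take i i.isLt.le x) (x i) ≤ 1 := by
  induction d with
  | zero => simp
  | succ n ih =>
    have htake (a : α) (y : Fin n → α) (i : Fin n) :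
        Fin.take i.castSucc i.castSucc.isLt.le (Fin.snoc y a : Fin (n + 1) → α) =
          Fin.take i i.isLt.le y := by
      funext j
      exact Fin.snoc_castSucc (α := fun _ => α) a y (Fin.castLE i.isLt.le j)
    calc ∑ x : Fin (n + 1) → α, ∏ i, κ i (Fin.take i i.isLt.le x) (x i)
        = ∑ y : Fin n → α, (∏ i : Fin n, κ i.castSucc (Fin.take i i.isLt.le y) (y i)) *
            ∑ a, κ (Fin.last n) y a := by
          rw [← (Fin.snocEquiv fun _ => α).sum_comp, Fintype.sum_prod_type_right]
          refine Finset.sum_congr rfl fun y _ => ?_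
          rw [Finset.mul_sum]
          refine Finset.sum_congr rfl fun a _ => ?_
          change ∏ i, κ i (Fin.take i i.isLt.le (Fin.snoc y a : Fin (n + 1) → α))
            ((Fin.snoc y a : Fin (n + 1) → α) i) = _
          rw [Fin.prod_univ_castSucc]
          simp only [htake, Fin.snoc_castSucc, Fin.snoc_last, Fin.take_eq_init, Fin.init_snoc,
            Fin.val_last]
      _ ≤ ∑ y : Fin n → α, ∏ i : Fin n, κ i.castSucc (Fin.take i i.isLt.le y) (y i) :=
          Finset.sum_le_sum fun y _ =>
            mul_le_of_le_one_right (Finset.prod_nonneg fun _ _ => hκ _ _ _) (hsum _ _)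
      _ ≤ 1 := ih (fun i => κ i.castSucc) (fun i => hκ i.castSucc)
        (fun i => hsum i.castSucc)

end Sums

section Matrix

open Matrix

variable {ι : Type*} [Fintype ι]

lemma enorm2_sq (v : ι → ℝ) : enorm2 v ^ 2 = ∑ k, v k ^ 2 :=
  Real.sq_sqrt (Finset.sum_nonneg fun _ _ => sq_nonneg _)

lemma enorm2_sq_eq_dotProduct (v : ι → ℝ) : enorm2 v ^ 2 = v ⬝ᵥ v := by
  rw [enorm2_sq]
  simp only [dotProduct, sq]

lemma sq_dotProduct_le (v w : ι → ℝ) : (v ⬝ᵥ w) ^ 2 ≤ enorm2 v ^ 2 * enorm2 w ^ 2 := by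
  simpa only [enorm2_sq, dotProduct] using Finset.sum_mul_sq_le_sq_mul_sq Finset.univ v w

variable [DecidableEq ι]

lemma specNorm_smul (w : ℝ) (M : Matrix ι ι ℝ) : specNorm (w • M) = |w| * specNorm M := by
  rw [specNorm, map_smul, norm_smul, Real.norm_eq_abs, specNorm]

lemma specNorm_le_of_abs_dotProduct_mulVec_le {M : Matrix ι ι ℝ} (hM : M.IsHermitian) {K : ℝ}
    (hK : 0 ≤ K) (h : ∀ v, |v ⬝ᵥ M *ᵥ v| ≤ K * enorm2 v ^ 2) : specNorm M ≤ K := by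
  rw [specNorm, ContinuousLinearMap.norm_eq_iSup_rayleighQuotient _
    (isSymmetric_toEuclideanLin_iff.2 hM)]
  refine Real.iSup_le (fun v => ?_) hK
  rw [ContinuousLinearMap.rayleighQuotient, ContinuousLinearMap.reApplyInnerSelf_apply,
    real_inner_comm, inner_toEuclideanCLM, RCLike.re_to_real, abs_div, abs_sq]
  refine div_le_of_le_mul₀ (sq_nonneg _) hK ((h v).trans_eq ?_)
  rw [EuclideanSpace.real_norm_sq_eq, enorm2_sq]

end Matrix

section BayesianNetwork

open Matrix

variable {d : ℕ} {Par : Fin d → Finset (Fin d)} {p : BNIdx d Par → ℝ}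

lemma bnDist_nonneg (hp : ∀ k, p k ∈ Set.Icc (0 : ℝ) 1) (x : Fin d → Bool) :
    0 ≤ bnDist Par p x :=
  Finset.prod_nonneg fun i _ => bernoulli_weight_nonneg (hp _) (x i)

lemma sum_bnDist_mul_prod_le_one (hPar : ∀ i, ∀ j ∈ Par i, j < i)
    (hp : ∀ k, p k ∈ Set.Icc (0 : ℝ) 1) {g : BNIdx d Par → Bool → ℝ} (hg : ∀ k b, 0 ≤ g k b)
    (hsum : ∀ k, ∑ b : Bool, (if b then p k else 1 - p k) * g k b ≤ 1) :
    ∑ x, bnDist Par p x * ∏ i, g ⟨i, cfgOf Par x i⟩ (x i) ≤ 1 := by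
  simp only [bnDist, ← Finset.prod_mul_distrib]
  let cfg (i : Fin d) (y : Fin i → Bool) : BNIdx d Par := ⟨i, fun j => y ⟨j.1, hPar i j.1 j.2⟩⟩
  exact sum_prod_take_le_one
    (fun i y b => (if b then p (cfg i y) else 1 - p (cfg i y)) * g (cfg i y) b)
    (fun i y b => mul_nonneg (bernoulli_weight_nonneg (hp _) b) (hg _ _)) (fun i y => hsum _)

/-- The vector `F(x, q) - q`, whose second moments under `R` are the entries of `M_R`. -/
noncomputable def deviation (q : BNIdx d Par → ℝ) (x : Fin d → Bool) : BNIdx d Par → ℝ :=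
  Fvec Par x q - q

lemma deviation_apply (q : BNIdx d Par → ℝ) (x : Fin d → Bool) (k : BNIdx d Par) :
    deviation q x k = if cfgOf Par x k.1 = k.2 then (if x k.1 then 1 else 0) - q k else 0 := by
  simp only [deviation, Fvec, Pi.sub_apply]
  split_ifs <;> ring

lemma dotProduct_deviation (v q : BNIdx d Par → ℝ) (x : Fin d → Bool) :
    v ⬝ᵥ deviation q x =
      ∑ i, v ⟨i, cfgOf Par x i⟩ * ((if x i then 1 else 0) - q ⟨i, cfgOf Par x i⟩) := by
  rw [dotProduct, Fintype.sum_sigma]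
  refine Finset.sum_congr rfl fun i _ => ?_
  simp [deviation_apply]

lemma sum_bnDist_mul_exp_dotProduct_deviation_le (hPar : ∀ i, ∀ j ∈ Par i, j < i)
    (hp : ∀ k, p k ∈ Set.Icc (0 : ℝ) 1) (v : BNIdx d Par → ℝ) :
    ∑ x, bnDist Par p x * Real.exp (v ⬝ᵥ deviation p x) ≤ Real.exp (enorm2 v ^ 2 / 8) := by
  let g (k : BNIdx d Par) (b : Bool) : ℝ :=
    Real.exp (v k * ((if b then 1 else 0) - p k) - v k ^ 2 / 8)
  have hg_sum (k : BNIdx d Par) : ∑ b : Bool, (if b then p k else 1 - p k) * g k b ≤ 1 := by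
    simp only [g, Real.exp_sub _ (v k ^ 2 / 8), ← mul_div_assoc, ← Finset.sum_div]
    exact (div_le_one (Real.exp_pos _)).2 (sum_bernoulli_mul_exp_le (hp k) (v k))
  have hsq_le (x : Fin d → Bool) : ∑ i, v ⟨i, cfgOf Par x i⟩ ^ 2 ≤ enorm2 v ^ 2 := by
    rw [enorm2_sq, Fintype.sum_sigma]
    exact Finset.sum_le_sum fun i _ => Finset.single_le_sum (f := fun a => v ⟨i, a⟩ ^ 2)
      (fun _ _ => sq_nonneg _) (Finset.mem_univ _)
  have hexp_le (x : Fin d → Bool) : Real.exp (v ⬝ᵥ deviation p x) ≤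
      Real.exp (enorm2 v ^ 2 / 8) * ∏ i, g ⟨i, cfgOf Par x i⟩ (x i) := by
    rw [← Real.exp_sum, Finset.sum_sub_distrib, ← dotProduct_deviation, ← Finset.sum_div,
      ← Real.exp_add]
    gcongr
    linarith [hsq_le x]
  calc ∑ x, bnDist Par p x * Real.exp (v ⬝ᵥ deviation p x)
      ≤ ∑ x, bnDist Par p x * (Real.exp (enorm2 v ^ 2 / 8) * ∏ i, g ⟨i, cfgOf Par x i⟩ (x i)) :=
        Finset.sum_le_sum fun x _ => mul_le_mul_of_nonneg_left (hexp_le x) (bnDist_nonneg hp x)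
    _ = Real.exp (enorm2 v ^ 2 / 8) * ∑ x, bnDist Par p x * ∏ i, g ⟨i, cfgOf Par x i⟩ (x i) := by
        rw [Finset.mul_sum]
        exact Finset.sum_congr rfl fun x _ => mul_left_comm _ _ _
    _ ≤ Real.exp (enorm2 v ^ 2 / 8) := mul_le_of_le_one_right (Real.exp_pos _).le
        (sum_bnDist_mul_prod_le_one hPar hp (fun _ _ => (Real.exp_pos _).le) hg_sum)

lemma sum_bnDist_mul_exp_mul_dotProduct_deviation_le (hPar : ∀ i, ∀ j ∈ Par i, j < i)
    (hp : ∀ k, p k ∈ Set.Icc (0 : ℝ) 1) (v : BNIdx d Par → ℝ) (t : ℝ) :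
    ∑ x, bnDist Par p x * Real.exp (t * (v ⬝ᵥ deviation p x)) ≤
      Real.exp (enorm2 v ^ 2 / 4 * t ^ 2 / 2) := by
  convert sum_bnDist_mul_exp_dotProduct_deviation_le hPar hp (t • v) using 2
  · simp only [smul_dotProduct, smul_eq_mul]
  · simp only [enorm2_sq_eq_dotProduct, smul_dotProduct, dotProduct_smul, smul_eq_mul]
    ring

lemma sq_dotProduct_deviation_le (v p q : BNIdx d Par → ℝ) (x : Fin d → Bool) :
    (v ⬝ᵥ deviation q x) ^ 2 ≤
      2 * (v ⬝ᵥ deviation p x) ^ 2 + 2 * (enorm2 v ^ 2 * enorm2 (p - q) ^ 2) := by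
  set shift := deviation q x - deviation p x
  have hshift : enorm2 shift ^ 2 ≤ enorm2 (p - q) ^ 2 := by
    rw [enorm2_sq, enorm2_sq]
    refine Finset.sum_le_sum fun k _ => ?_
    simp only [shift, Pi.sub_apply, deviation_apply]
    split_ifs <;> nlinarith [sq_nonneg (p k - q k)]
  calc (v ⬝ᵥ deviation q x) ^ 2 = (v ⬝ᵥ deviation p x + v ⬝ᵥ shift) ^ 2 := by
        rw [← dotProduct_add, add_sub_cancel]
    _ ≤ 2 * ((v ⬝ᵥ deviation p x) ^ 2 + (v ⬝ᵥ shift) ^ 2) := add_sq_le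
    _ ≤ 2 * ((v ⬝ᵥ deviation p x) ^ 2 + enorm2 v ^ 2 * enorm2 (p - q) ^ 2) := by
        gcongr
        exact (sq_dotProduct_le v shift).trans (by gcongr)
    _ = _ := mul_add _ _ _

lemma covM_isHermitian (R : (Fin d → Bool) → ℝ) (q : BNIdx d Par → ℝ) :
    (covM Par R q).IsHermitian :=
  IsHermitian.ext fun k l => by simp only [covM, mul_comm, star_trivial]

lemma covM_smul (w : ℝ) (R : (Fin d → Bool) → ℝ) (q : BNIdx d Par → ℝ) :
    covM Par (w • R) q = w • covM Par R q := by
  ext k l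
  simp only [covM, expec, Pi.smul_apply, smul_eq_mul, Matrix.smul_apply, Finset.mul_sum, mul_assoc]

lemma dotProduct_covM_mulVec (R : (Fin d → Bool) → ℝ) (v q : BNIdx d Par → ℝ) :
    v ⬝ᵥ covM Par R q *ᵥ v = ∑ x, R x * (v ⬝ᵥ deviation q x) ^ 2 := by
  have hcovM : covM Par R q = ∑ x, R x • vecMulVec (deviation q x) (deviation q x) := by
    ext k l
    simp [covM, expec, Matrix.sum_apply, vecMulVec_apply, deviation]
  rw [hcovM, sum_mulVec, dotProduct_sum]
  refine Finset.sum_congr rfl fun x _ => ?_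
  rw [smul_mulVec, dotProduct_smul, vecMulVec_mulVec, dotProduct_smul,
    op_smul_eq_smul, dotProduct_comm _ v, smul_eq_mul, smul_eq_mul, sq]

theorem specNorm_covM_le (hPar : ∀ i, ∀ j ∈ Par i, j < i) (hp : ∀ k, p k ∈ Set.Icc (0 : ℝ) 1)
    (q : BNIdx d Par → ℝ) {R : (Fin d → Bool) → ℝ} {δ K s : ℝ} (hs : 0 < s) (hK : 0 ≤ K)
    (hR : ∀ x, 0 ≤ R x) (hmass : ∑ x, R x ≤ δ) (hRP : ∀ x, R x ≤ K * bnDist Par p x) :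
    specNorm (covM Par R q) ≤
      2 * (s * δ + K / s * Real.exp (-s)) + 2 * δ * enorm2 (p - q) ^ 2 := by
  have hδ : 0 ≤ δ := (Finset.sum_nonneg fun x _ => hR x).trans hmass
  refine specNorm_le_of_abs_dotProduct_mulVec_le (covM_isHermitian R q) (by positivity) fun v => ?_
  rw [dotProduct_covM_mulVec,
    abs_of_nonneg (Finset.sum_nonneg fun x _ => mul_nonneg (hR x) (sq_nonneg _))]
  rcases eq_or_ne v 0 with rfl | hv
  · simp [enorm2_sq]
  have hv_pos : 0 < enorm2 v ^ 2 :=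
    (sq_nonneg _).lt_of_ne' (by rwa [enorm2_sq_eq_dotProduct, Ne, dotProduct_self_eq_zero])
  calc ∑ x, R x * (v ⬝ᵥ deviation q x) ^ 2
      ≤ ∑ x, R x * (2 * (v ⬝ᵥ deviation p x) ^ 2 +
          2 * (enorm2 v ^ 2 * enorm2 (p - q) ^ 2)) :=
        Finset.sum_le_sum fun x _ =>
          mul_le_mul_of_nonneg_left (sq_dotProduct_deviation_le v p q x) (hR x)
    _ = 2 * ∑ x, R x * (v ⬝ᵥ deviation p x) ^ 2 +
          2 * (enorm2 v ^ 2 * enorm2 (p - q) ^ 2) * ∑ x, R x := by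
        simp only [mul_add, Finset.sum_add_distrib, Finset.mul_sum]
        congr 1 <;> exact Finset.sum_congr rfl fun x _ => by ring
    _ ≤ 2 * (4 * (enorm2 v ^ 2 / 4) * (s * δ + K / s * Real.exp (-s))) +
          2 * (enorm2 v ^ 2 * enorm2 (p - q) ^ 2) * δ := by
        gcongr
        exact sum_mul_sq_le_of_subgaussian (by positivity) hs hK
          (sum_bnDist_mul_exp_mul_dotProduct_deviation_le hPar hp v) hR hmass hRP
    _ = _ := by ring

theorem subtractive_error_covM_spectral_bound_general (hPar : ∀ i, ∀ j ∈ Par i, j < i) {ε : ℝ}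
    (hε : ε ∈ Set.Ioc 0 (Real.exp (-1))) (hp : ∀ k, p k ∈ Set.Icc (0 : ℝ) 1)
    (q : BNIdx d Par → ℝ) {L : (Fin d → Bool) → ℝ} (hL : IsProbDist L) {wL wP : ℝ}
    (hwL : 0 ≤ wL) (hwLε : wL ≤ 2 * ε) (hwP : wP ≤ 2)
    (hLP : ∀ x, wL * L x ≤ wP * bnDist Par p x) :
    wL * specNorm (covM Par L q) ≤
      8 * (ε * Real.log (1 / ε) + ε * enorm2 (p - q) ^ 2) := by
  obtain ⟨hε_pos, hε_le⟩ := hε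
  set s := Real.log (1 / ε)
  have hexp : Real.exp (-s) = ε := by
    rw [← Real.log_inv, one_div, inv_inv, Real.exp_log hε_pos]
  have hs : 1 ≤ s := by
    rw [← hexp, Real.exp_le_exp] at hε_le
    exact neg_le_neg_iff.1 hε_le
  have hmass : ∑ x, (wL • L) x ≤ 2 * ε := by
    simpa only [Pi.smul_apply, smul_eq_mul, ← Finset.mul_sum, hL.2, mul_one] using hwLε
  have hdom (x) : (wL • L) x ≤ 2 * bnDist Par p x :=
    (hLP x).trans (mul_le_mul_of_nonneg_right hwP (bnDist_nonneg hp x))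
  calc wL * specNorm (covM Par L q) = specNorm (covM Par (wL • L) q) := by
        rw [covM_smul, specNorm_smul, abs_of_nonneg hwL]
    _ ≤ 2 * (s * (2 * ε) + 2 / s * Real.exp (-s)) + 2 * (2 * ε) * enorm2 (p - q) ^ 2 :=
        specNorm_covM_le hPar hp q (by positivity) zero_le_two
          (fun x => mul_nonneg hwL (hL.1 x)) hmass hdom
    _ ≤ 2 * (s * (2 * ε) + 2 * s * ε) + 4 * (2 * ε) * enorm2 (p - q) ^ 2 := by
        have : 2 / s ≤ 2 * s := (div_le_iff₀ (by positivity)).2 (by nlinarith)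
        rw [hexp]
        gcongr
        norm_num
    _ = 8 * (ε * s + ε * enorm2 (p - q) ^ 2) := by ring

end BayesianNetwork

theorem subtractive_error_covM_spectral_bound :
    ∃ C : ℝ, 0 < C ∧ ∃ ε₀ : ℝ, ε₀ ∈ Set.Ioo (0:ℝ) 1 ∧
      ∀ (d : ℕ), 1 ≤ d → ∀ (Par : Fin d → Finset (Fin d)),
        (∀ i : Fin d, ∀ j ∈ Par i, j < i) →
        ∀ (ε : ℝ), ε ∈ Set.Ioo 0 ε₀ →
        ∀ (p q : BNIdx d Par → ℝ),
          (∀ k, p k ∈ Set.Icc (0:ℝ) 1) → (∀ k, q k ∈ Set.Icc (0:ℝ) 1) →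
        ∀ (L : (Fin d → Bool) → ℝ), IsProbDist L →
        ∀ (wL wP : ℝ), 0 ≤ wL → wL ≤ 2 * ε → 0 < wP → wP ≤ 2 →
          (∀ x, wL * L x ≤ wP * bnDist Par p x) →
          wL * specNorm (covM Par L q) ≤
            C * (ε * Real.log (1 / ε) +
              ε * enorm2 (fun k : BNIdx d Par => p k - q k) ^ 2) := by
  refine ⟨8, by norm_num, Real.exp (-1), ⟨Real.exp_pos _, by simp⟩, ?_⟩
  intro d _ Par hPar ε hε p q hp _ L hL wL wP hwL hwLε _ hwP hLP
  exact subtractive_error_covM_spectral_bound_general hPar (Set.Ioo_subset_Ioc_self hε) hp q hL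
    hwL hwLε hwP hLP
end

section
/- Let p ∈ [0,1]^S, q ∈ ℝ^S, and P = P_p. Then for every k ∈ {1,…,m}, E_{X∼P}[F(X,q)_k] − q_k = Pr_P[Π_k]·(p_k − q_k). -/
open scoped BigOperators Classical

/-!
The identity reduces to `Pr[X_i = 1, Π_k] = p_k * Pr[Π_k]` for `k = (i, a)`. Replace the entry
`p_k` of the table by `1` and call the result `r`. Off `Π_k` the weights of `r` and `p` agree, and
both total masses are `1` (sum out the nodes from the last to the first), so `Pr[Π_k]` is the same
under both. On `Π_k` the factor of node `i` is the only one that changes, so multiplying the weight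
of `x` under `r` by `p_k` gives its weight under `p` if `x_i = 1`, and `0` otherwise; now sum over
`Π_k`.
-/

section SequentialWeights

theorem take_snoc {d : ℕ} {α : Fin (d + 1) → Type*} (y : (i : Fin d) → α i.castSucc)
    (a : α (Fin.last d)) (n : ℕ) (hn : n ≤ d) :
    Fin.take n (hn.trans d.le_succ) (Fin.snoc y a : (i : Fin (d + 1)) → α i) =
      Fin.take n hn y :=
  funext fun j => Fin.snoc_castSucc a y (Fin.castLE hn j)

variable {R : Type*} [CommSemiring R]

theorem prod_take_snoc {d : ℕ} {α : Fin (d + 1) → Type*}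
    (κ : (i : Fin (d + 1)) → ((j : Fin i) → α (Fin.castLE i.is_lt.le j)) → α i → R)
    (y : (i : Fin d) → α i.castSucc) (a : α (Fin.last d)) :
    ∏ i, κ i (Fin.take i i.is_lt.le (Fin.snoc y a : (i : Fin (d + 1)) → α i))
        ((Fin.snoc y a : (i : Fin (d + 1)) → α i) i) =
      (∏ i : Fin d, κ i.castSucc (Fin.take i i.is_lt.le y) (y i)) * κ (Fin.last d) y a := by
  rw [Fin.prod_univ_castSucc, Fin.snoc_last]
  congr 1
  · refine Finset.prod_congr rfl fun i _ => ?_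
    rw [Fin.snoc_castSucc]
    exact congrArg (κ i.castSucc · (y i)) (take_snoc y a i i.is_lt.le)
  · exact congrArg (κ (Fin.last d) · a) (take_snoc y a d le_rfl)

theorem sum_prod_take_eq_one {d : ℕ} {α : Fin d → Type*} [∀ i, Fintype (α i)]
    (κ : (i : Fin d) → ((j : Fin i) → α (Fin.castLE i.is_lt.le j)) → α i → R)
    (hκ : ∀ i h, ∑ a, κ i h a = 1) :
    ∑ x : (i : Fin d) → α i, ∏ i, κ i (Fin.take i i.is_lt.le x) (x i) = 1 := by
  induction d with
  | zero => simp
  | succ d ih =>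
    calc
      _ = ∑ y : (i : Fin d) → α i.castSucc, ∑ a : α (Fin.last d),
            (∏ i : Fin d, κ i.castSucc (Fin.take i i.is_lt.le y) (y i)) * κ (Fin.last d) y a := by
          rw [← (Fin.snocEquiv α).sum_comp, Fintype.sum_prod_type_right]
          exact Finset.sum_congr rfl fun y _ => Finset.sum_congr rfl fun a _ => prod_take_snoc κ y a
      _ = ∑ y : (i : Fin d) → α i.castSucc,
            ∏ i : Fin d, κ i.castSucc (Fin.take i i.is_lt.le y) (y i) := by
          refine Finset.sum_congr rfl fun y _ => ?_
          rw [← Finset.mul_sum, hκ (Fin.last d) y, mul_one]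
      _ = 1 := ih (α := fun i => α i.castSucc) (fun i => κ i.castSucc) fun i => hκ i.castSucc

end SequentialWeights

section BayesianNetwork

variable {d : ℕ} {Par : Fin d → Finset (Fin d)}

theorem sum_bnDist (hpar : ∀ i : Fin d, ∀ j ∈ Par i, j < i) (p : BNIdx d Par → ℝ) :
    ∑ x, bnDist Par p x = 1 :=
  sum_prod_take_eq_one (α := fun _ => Bool)
    (fun i h b =>
      let r := p ⟨i, fun j => h ⟨j.1, hpar i j.1 j.2⟩⟩
      if b then r else 1 - r)
    fun i h => by simp

theorem bnDist_update_of_cfgOf_ne (p : BNIdx d Par → ℝ) {k : BNIdx d Par} (r : ℝ)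
    {x : Fin d → Bool} (hx : cfgOf Par x k.1 ≠ k.2) :
    bnDist Par (Function.update p k r) x = bnDist Par p x := by
  have entry_ne (i : Fin d) : (⟨i, cfgOf Par x i⟩ : BNIdx d Par) ≠ k := by
    rintro rfl
    exact hx rfl
  simp only [bnDist, Function.update_of_ne (entry_ne _)]

theorem bnDist_update_of_cfgOf_eq (p : BNIdx d Par → ℝ) {k : BNIdx d Par} (r : ℝ)
    {x : Fin d → Bool} (hx : cfgOf Par x k.1 = k.2) :
    bnDist Par (Function.update p k r) x =
      (if x k.1 then r else 1 - r) * ∏ i ∈ Finset.univ.erase k.1,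
        if x i then p ⟨i, cfgOf Par x i⟩ else 1 - p ⟨i, cfgOf Par x i⟩ := by
  have entry_eq : (⟨k.1, cfgOf Par x k.1⟩ : BNIdx d Par) = k := by rw [hx]
  rw [bnDist, ← Finset.mul_prod_erase _ _ (Finset.mem_univ k.1), entry_eq,
    Function.update_self]
  congr 1
  refine Finset.prod_congr rfl fun i hi => ?_
  have entry_ne : (⟨i, cfgOf Par x i⟩ : BNIdx d Par) ≠ k :=
    fun h => Finset.ne_of_mem_erase hi (congrArg Sigma.fst h)
  rw [Function.update_of_ne entry_ne]

theorem mul_bnDist_update_one (p : BNIdx d Par → ℝ) {k : BNIdx d Par} {x : Fin d → Bool}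
    (hx : cfgOf Par x k.1 = k.2) :
    p k * bnDist Par (Function.update p k 1) x = if x k.1 then bnDist Par p x else 0 := by
  have hp := bnDist_update_of_cfgOf_eq p (p k) hx
  rw [Function.update_eq_self] at hp
  rw [hp, bnDist_update_of_cfgOf_eq p 1 hx]
  split_ifs <;> ring

theorem prCfg_bnDist_update (hpar : ∀ i : Fin d, ∀ j ∈ Par i, j < i) (p : BNIdx d Par → ℝ)
    (k : BNIdx d Par) (r : ℝ) :
    prCfg Par (bnDist Par (Function.update p k r)) k = prCfg Par (bnDist Par p) k := by
  have mass_change_on_cfg (x : Fin d → Bool) :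
      (if cfgOf Par x k.1 = k.2 then bnDist Par (Function.update p k r) x else 0) -
          (if cfgOf Par x k.1 = k.2 then bnDist Par p x else 0) =
        bnDist Par (Function.update p k r) x - bnDist Par p x := by
    split_ifs with hx
    · rfl
    · rw [bnDist_update_of_cfgOf_ne p r hx, sub_self, sub_self]
  rw [← sub_eq_zero, prCfg, prCfg, ← Finset.sum_sub_distrib,
    Finset.sum_congr rfl fun x _ => mass_change_on_cfg x, Finset.sum_sub_distrib,
    sum_bnDist hpar, sum_bnDist hpar, sub_self]

theorem prEvent_bnDist_cfgOf_and (hpar : ∀ i : Fin d, ∀ j ∈ Par i, j < i)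
    (p : BNIdx d Par → ℝ) (k : BNIdx d Par) :
    prEvent (bnDist Par p) (fun x => cfgOf Par x k.1 = k.2 ∧ x k.1) =
      p k * prCfg Par (bnDist Par p) k := by
  rw [← prCfg_bnDist_update hpar p k 1, prEvent, prCfg, Finset.mul_sum]
  refine Finset.sum_congr rfl fun x _ => ?_
  by_cases hx : cfgOf Par x k.1 = k.2
  · simp only [hx, true_and, if_true, mul_bnDist_update_one p hx]
  · simp only [hx, false_and, if_false, mul_zero]

theorem expec_Fvec_sub {R : (Fin d → Bool) → ℝ} (hR : ∑ x, R x = 1) (q : BNIdx d Par → ℝ)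
    (k : BNIdx d Par) :
    expec R (fun x => Fvec Par x q k) - q k =
      prEvent R (fun x => cfgOf Par x k.1 = k.2 ∧ x k.1) - prCfg Par R k * q k := by
  have sum_mul_const : ∑ x, R x * q k = q k := by rw [← Finset.sum_mul, hR, one_mul]
  calc
    _ = ∑ x, (R x * Fvec Par x q k - R x * q k) := by
        rw [Finset.sum_sub_distrib, sum_mul_const, expec]
    _ = _ := by
        rw [prEvent, prCfg, Finset.sum_mul, ← Finset.sum_sub_distrib]
        refine Finset.sum_congr rfl fun x _ => ?_
        by_cases hx : cfgOf Par x k.1 = k.2 <;> simp [Fvec, hx]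

theorem mean_of_Fvec_sub_q_general (hpar : ∀ i : Fin d, ∀ j ∈ Par i, j < i)
    (p q : BNIdx d Par → ℝ) (k : BNIdx d Par) :
    expec (bnDist Par p) (fun x => Fvec Par x q k) - q k =
      prCfg Par (bnDist Par p) k * (p k - q k) := by
  rw [expec_Fvec_sub (sum_bnDist hpar p), prEvent_bnDist_cfgOf_and hpar]
  ring

end BayesianNetwork

theorem mean_of_Fvec_sub_q
    (d : ℕ) (hd : 1 ≤ d) (Par : Fin d → Finset (Fin d))
    (hpar : ∀ i : Fin d, ∀ j ∈ Par i, j < i)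
    (p : BNIdx d Par → ℝ) (hp : ∀ k, p k ∈ Set.Icc (0:ℝ) 1)
    (q : BNIdx d Par → ℝ) (k : BNIdx d Par) :
    expec (bnDist Par p) (fun x => Fvec Par x q k) - q k
      = prCfg Par (bnDist Par p) k * (p k - q k) := by
  exact mean_of_Fvec_sub_q_general hpar p q k
end
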